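/- arXiv:1403.0246 — 3 statements merged into one kernel-verified Lean document; each statement's English description precedes it below -/
import Mathlib

section
/- Let g : [0,1] → ℝ be continuous and assume g is not monotone on any nontrivial subinterval of [0,1]. Then the set B = {b ∈ ℝ : the level set {x ∈ [0,1] : g(x) = b} is not perfect} is meagre in ℝ. -/
open Set Filter Metric Topology

/-!
A level set fails to be perfect only if it has an isolated point `x`, so that `x` is the unique
solution of `g y = g x` in some member `U` of a countable basis of intervals. It therefore suffices
that, for each interval, the values attained exactly once there form a nowhere dense set. If these
values were dense in an open interval, the intermediate value theorem would make `g` monotone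
between any two points where two such values are attained.
-/

/-- `g` is monotone on no nontrivial compact interval with endpoints in `s`. This is meant for
order-connected `s`, where these intervals are contained in `s`. -/
def NowhereMonotoneOn {α β : Type*} [Preorder α] [Preorder β] (g : α → β) (s : Set α) : Prop :=
  ∀ ⦃c⦄, c ∈ s → ∀ ⦃d⦄, d ∈ s → c < d → ¬ (MonotoneOn g (Icc c d) ∨ AntitoneOn g (Icc c d))

/-- The points of `s` whose value under `g` is attained only once on `s`. The image of this set
under `g` is the set of values attained exactly once on `s`. -/
def injectivityPoints {α β : Type*} (g : α → β) (s : Set α) : Set α :=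
  {x ∈ s | ∀ ⦃y⦄, y ∈ s → g y = g x → y = x}

theorem NowhereMonotoneOn.mono {α β : Type*} [Preorder α] [Preorder β] {g : α → β} {s t : Set α}
    (hg : NowhereMonotoneOn g t) (hst : s ⊆ t) : NowhereMonotoneOn g s :=
  fun _ hc _ hd => hg (hst hc) (hst hd)

theorem exists_countable_isTopologicalBasis_ordConnected (α : Type*) [LinearOrder α]
    [TopologicalSpace α] [OrderTopology α] [DenselyOrdered α] [TopologicalSpace.SeparableSpace α] :
    ∃ B : Set (Set α), B.Countable ∧ TopologicalSpace.IsTopologicalBasis B ∧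
      ∀ U ∈ B, U.OrdConnected := by
  obtain ⟨D, hD, hdense⟩ := TopologicalSpace.exists_countable_dense α
  have hsub : (Ioi '' D ∪ Iio '' D).Countable := (hD.image _).union (hD.image _)
  refine ⟨_, (countable_ofPred_finite_subset hsub).image _,
    TopologicalSpace.isTopologicalBasis_of_subbasis hdense.topology_eq_generateFrom, ?_⟩
  rintro _ ⟨F, ⟨-, hF⟩, rfl⟩
  refine ordConnected_sInter fun V hV => ?_
  rcases hF hV with ⟨a, -, rfl⟩ | ⟨a, -, rfl⟩
  exacts [ordConnected_Ioi, ordConnected_Iio]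

theorem exists_mem_image_injectivityPoints_of_not_preperfect {α β : Type*} [TopologicalSpace α]
    {B : Set (Set α)} (hB : TopologicalSpace.IsTopologicalBasis B) {g : α → β} {s : Set α} {b : β}
    (hb : ¬ Preperfect {x | x ∈ s ∧ g x = b}) :
    ∃ U ∈ B, b ∈ g '' injectivityPoints g (s ∩ U) := by
  simp only [Preperfect, accPt_iff_nhds] at hb
  push Not at hb
  obtain ⟨x, ⟨hxs, rfl⟩, V, hV, hisolated⟩ := hb
  obtain ⟨U, hUB, hxU, hUV⟩ := hB.mem_nhds_iff.1 hV
  exact ⟨U, hUB, x, ⟨⟨hxs, hxU⟩, fun y hy hyx => hisolated y ⟨hUV hy.2, hy.1, hyx⟩⟩, rfl⟩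

section IntermediateValue

variable {α β : Type*} [ConditionallyCompleteLinearOrder α] [TopologicalSpace α] [OrderTopology α]
  [DenselyOrdered α] [LinearOrder β] [TopologicalSpace β] [OrderClosedTopology β]
  {g : α → β} {s : Set α} {a c x y : α}

theorem le_apply_of_mem_injectivityPoints (hs : s.OrdConnected) (hg : ContinuousOn g s)
    (hx : x ∈ injectivityPoints g s) (hc : c ∈ s) (hxy : x ≤ y) (hyc : y ≤ c)
    (hgxc : g x ≤ g c) : g x ≤ g y := by
  by_contra! hlt
  have hy : y ∈ s := hs.out hx.1 hc ⟨hxy, hyc⟩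
  obtain ⟨z, hz, hgz⟩ := intermediate_value_Icc hyc (hg.mono (hs.out hy hc)) ⟨hlt.le, hgxc⟩
  have hzx : z = x := hx.2 (hs.out hy hc hz) hgz
  exact hlt.ne (congrArg g (le_antisymm (hzx ▸ hz.1) hxy))

theorem apply_le_of_mem_injectivityPoints (hs : s.OrdConnected) (hg : ContinuousOn g s)
    (hx : x ∈ injectivityPoints g s) (ha : a ∈ s) (hay : a ≤ y) (hyx : y ≤ x)
    (hgax : g a ≤ g x) : g y ≤ g x :=
  le_apply_of_mem_injectivityPoints (α := αᵒᵈ) (β := βᵒᵈ) hs.dual hg hx ha hyx hay hgax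

theorem monotoneOn_Icc_of_subset_closure_image_injectivityPoints [DenselyOrdered β]
    (hs : s.OrdConnected) (hg : ContinuousOn g s) (ha : a ∈ injectivityPoints g s)
    (hc : c ∈ injectivityPoints g s) (hgac : g a ≤ g c)
    (hdense : Icc (g a) (g c) ⊆ closure (g '' injectivityPoints g s)) :
    MonotoneOn g (Icc a c) := by
  intro u hu v hv huv
  by_contra! hlt
  have hav : g a ≤ g v := le_apply_of_mem_injectivityPoints hs hg ha hc.1 hv.1 hv.2 hgac
  have huc : g u ≤ g c := apply_le_of_mem_injectivityPoints hs hg hc ha.1 hu.1 hu.2 hgac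
  obtain ⟨m, hm⟩ := exists_between hlt
  obtain ⟨_, ⟨hvx, hxu⟩, x, hx, rfl⟩ := mem_closure_iff.1
    (hdense ⟨hav.trans hm.1.le, hm.2.le.trans huc⟩) _ isOpen_Ioo hm
  rcases le_total u x with hux | hxu'
  · exact hxu.not_ge <| apply_le_of_mem_injectivityPoints hs hg hx ha.1 hu.1 hux
      (hav.trans hvx.le)
  · exact hvx.not_ge <| le_apply_of_mem_injectivityPoints hs hg hx hc.1 (hxu'.trans huv) hv.2
      (hxu.le.trans huc)

theorem antitoneOn_Icc_of_subset_closure_image_injectivityPoints [DenselyOrdered β]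
    (hs : s.OrdConnected) (hg : ContinuousOn g s) (ha : a ∈ injectivityPoints g s)
    (hc : c ∈ injectivityPoints g s) (hgca : g c ≤ g a)
    (hdense : Icc (g c) (g a) ⊆ closure (g '' injectivityPoints g s)) :
    AntitoneOn g (Icc a c) :=
  monotoneOn_Icc_of_subset_closure_image_injectivityPoints (β := βᵒᵈ) hs hg ha hc hgca
    fun _ hb => hdense ⟨hb.2, hb.1⟩

end IntermediateValue

section OrderTopology

variable {α β : Type*} [ConditionallyCompleteLinearOrder α] [TopologicalSpace α] [OrderTopology α]
  [DenselyOrdered α] [LinearOrder β] [TopologicalSpace β] [OrderTopology β] [DenselyOrdered β]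
  [Nontrivial β] {g : α → β} {s : Set α}

theorem NowhereMonotoneOn.isNowhereDense_image_injectivityPoints (hnm : NowhereMonotoneOn g s)
    (hs : s.OrdConnected) (hg : ContinuousOn g s) :
    IsNowhereDense (g '' injectivityPoints g s) := by
  rw [IsNowhereDense, ← not_nonempty_iff_eq_empty]
  intro hne
  obtain ⟨l, r, hlr, hdense⟩ := isOpen_interior.exists_Ioo_subset hne
  replace hdense := hdense.trans interior_subset
  have exists_injectivityPoint : ∀ l' r', l ≤ l' → l' < r' → r' ≤ r →
      ∃ x ∈ injectivityPoints g s, g x ∈ Ioo l' r' := by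
    intro l' r' hl hlr' hr
    obtain ⟨m, hm⟩ := exists_between hlr'
    obtain ⟨_, hb, x, hx, rfl⟩ := mem_closure_iff.1
      (hdense (Ioo_subset_Ioo hl hr hm)) _ isOpen_Ioo hm
    exact ⟨x, hx, hb⟩
  obtain ⟨m, hlm, hmr⟩ := exists_between hlr
  obtain ⟨x, hx, hlx, hxm⟩ := exists_injectivityPoint l m le_rfl hlm hmr.le
  obtain ⟨y, hy, hmy, hyr⟩ := exists_injectivityPoint m r hlm.le hmr le_rfl
  have hgxy : g x < g y := hxm.trans hmy
  have hIcc := (Icc_subset_Ioo hlx hyr).trans hdense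
  rcases lt_trichotomy x y with hxy | rfl | hyx
  · exact hnm hx.1 hy.1 hxy <| .inl <|
      monotoneOn_Icc_of_subset_closure_image_injectivityPoints hs hg hx hy hgxy.le hIcc
  · exact hgxy.false
  · exact hnm hy.1 hx.1 hyx <| .inr <|
      antitoneOn_Icc_of_subset_closure_image_injectivityPoints hs hg hy hx hgxy.le hIcc

theorem meagre_nonperfect_levels_general [TopologicalSpace.SeparableSpace α] (hclosed : IsClosed s)
    (hs : s.OrdConnected) (hg : ContinuousOn g s) (hnm : NowhereMonotoneOn g s) :
    IsMeagre {b : β | ¬ Perfect {x : α | x ∈ s ∧ g x = b}} := by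
  obtain ⟨B, hBc, hB, hBord⟩ := exists_countable_isTopologicalBasis_ordConnected α
  have hmeagre : IsMeagre (⋃ U ∈ B, g '' injectivityPoints g (s ∩ U)) :=
    isMeagre_biUnion hBc fun U hU =>
      ((hnm.mono inter_subset_left).isNowhereDense_image_injectivityPoints
        (hs.inter (hBord U hU)) (hg.mono inter_subset_left)).isMeagre
  refine hmeagre.mono fun b hb => ?_
  have hlevel : IsClosed {x | x ∈ s ∧ g x = b} :=
    hg.preimage_isClosed_of_isClosed hclosed (isClosed_singleton (x := b))
  simpa only [mem_iUnion, exists_prop] using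
    exists_mem_image_injectivityPoints_of_not_preperfect hB fun hpre => hb ⟨hlevel, hpre⟩

end OrderTopology

/-- **Lemma 2.3.** If `g : [0,1] → ℝ` is continuous and not monotone on any
nontrivial subinterval of `[0,1]`, then the set of values `b` whose level set
`{x ∈ [0,1] : g x = b}` is not perfect is meagre in `ℝ`. -/
theorem meagre_nonperfect_levels (g : ℝ → ℝ)
    (hg : ContinuousOn g (Icc 0 1))
    (hnm : ∀ c d : ℝ, 0 ≤ c → c < d → d ≤ 1 →
      ¬ (MonotoneOn g (Icc c d) ∨ AntitoneOn g (Icc c d))) :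
    IsMeagre {b : ℝ | ¬ Perfect {x : ℝ | x ∈ Icc (0:ℝ) 1 ∧ g x = b}} :=
  meagre_nonperfect_levels_general isClosed_Icc ordConnected_Icc hg
    fun c hc d hd hcd => hnm c d hc.1 hcd hd.2
end

section
/- Let Δ > 0 and let F : [0,Δ) → ℝ be convex and differentiable with F(0) = 0, whose derivative f is continuous and increasing with f(0) = 0, and assume liminf_{x→0⁺} f(x)/x = 0 and limsup_{x→0⁺} f(x)/x = ∞. Let v = (v₁, v₂) ∈ ℝ² with v₁ < 0 and v₂ > 0. For x ∈ [0,Δ) put z(x) = (x, F(x)), let N(z(x)) be the normal line to the graph of F at z(x), and let R(z(x)) be the reflection across N(z(x)) of the line through v and z(x); whenever R(z(x)) and R(z(0)) intersect in a single point, let y(x) denote the second coordinate of that point. Then for every ε > 0 there exist x₁, x₂ ∈ (0, ε) such that y(x₁) < 0 and 0 < y(x₂) < ε. -/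
open Set Filter Metric Topology

noncomputable section

/-- The Euclidean inner product on `ℝ × ℝ`. -/
def ip (a b : ℝ × ℝ) : ℝ := a.1 * b.1 + a.2 * b.2

/-- Reflection of the point `q` across the line through `p` with direction `d`. -/
def reflAcrossLine (p d q : ℝ × ℝ) : ℝ × ℝ :=
  p + (2 * ip (q - p) d / ip d d) • d - (q - p)

/-- The line through the points `v` and `w`. -/
def lineThrough (v w : ℝ × ℝ) : Set (ℝ × ℝ) :=
  {p : ℝ × ℝ | ∃ t : ℝ, p = v + t • (w - v)}

/-- The point `z(x) = (x, F x)` on the graph of `F`. -/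
def zpt (F : ℝ → ℝ) (x : ℝ) : ℝ × ℝ := (x, F x)

/-- A direction vector of the normal line `N(z(x))` of the graph of `F` at `z(x)`,
perpendicular to the tangent direction `(1, f x)`. -/
def normalDir (f : ℝ → ℝ) (x : ℝ) : ℝ × ℝ := (-(f x), 1)

/-- `R(z(x))`: the reflection across the normal line `N(z(x))` of the line
through `v` and `z(x)`. -/
def Rline (F f : ℝ → ℝ) (v : ℝ × ℝ) (x : ℝ) : Set (ℝ × ℝ) :=
  (reflAcrossLine (zpt F x) (normalDir f x)) '' lineThrough v (zpt F x)

/-!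
Let `e = (-v₁, v₂)` be the direction of `R(z(0))` and let `d` be a direction of `R(z)` at
`z = z(x)`. By Cramer's rule the two lines meet at `((z × d) / (e × d)) • e`. As `x → 0⁺`, both
`f x` and `F x / x` tend to `0`, so `d → e` and `(z × d) / x → v₂`, while
`e × d = 2 f(x) ⟨v, v - z⟩ - (1 - f(x)²) (z × v)` behaves like `x (2 |v|² f(x) / x - v₂)`.
Hence `y(x) ≈ v₂² / (2 |v|² f(x) / x - v₂)`: negative where `f(x) / x` is small, and positive but
small where `f(x) / x` is large.
-/

theorem ip_self_pos {v : ℝ × ℝ} (hv : v ≠ 0) : 0 < ip v v := by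
  rw [ne_eq, Prod.ext_iff, not_and_or] at hv
  rcases hv with h | h
  · exact add_pos_of_pos_of_nonneg (mul_self_pos.2 h) (mul_self_nonneg _)
  · exact add_pos_of_nonneg_of_pos (mul_self_nonneg _) (mul_self_pos.2 h)

/-- The cross product of two plane vectors, the determinant in Cramer's rule for the meeting
point of two lines. -/
def cross (a b : ℝ × ℝ) : ℝ := a.1 * b.2 - a.2 * b.1

/-- The reflection of the vector `u` across the direction `(-m, 1)` normal to the slope `m`. It
serves as a direction of a reflected line, so it is multiplied by `1 + m ^ 2` to be polynomial. -/
def reflectedDir (m : ℝ) (u : ℝ × ℝ) : ℝ × ℝ :=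
  ((m ^ 2 - 1) * u.1 - 2 * m * u.2, (1 - m ^ 2) * u.2 - 2 * m * u.1)

theorem reflectedDir_zero (u : ℝ × ℝ) : reflectedDir 0 u = (-u.1, u.2) := by
  simp [reflectedDir]

theorem cross_reflectedDir_zero_reflectedDir (m : ℝ) (v z : ℝ × ℝ) :
    cross (reflectedDir 0 v) (reflectedDir m (v - z)) =
      2 * m * ip v (v - z) - (1 - m ^ 2) * cross z v := by
  simp only [cross, reflectedDir, ip, Prod.fst_sub, Prod.snd_sub]
  ring

theorem mem_lineThrough_add_iff {p d q : ℝ × ℝ} :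
    q ∈ lineThrough p (p + d) ↔ ∃ t : ℝ, q = p + t • d := by
  simp [lineThrough]

theorem lineThrough_inter_lineThrough {p d q e : ℝ × ℝ} (h : cross e d ≠ 0) :
    lineThrough p (p + d) ∩ lineThrough q (q + e) =
      {q + (cross (p - q) d / cross e d) • e} := by
  ext w
  rw [mem_inter_iff, mem_lineThrough_add_iff, mem_lineThrough_add_iff, mem_singleton_iff]
  constructor
  · rintro ⟨⟨s, hs⟩, t, rfl⟩
    suffices cross (p - q) d / cross e d = t by rw [this]
    have h₁ := congrArg Prod.fst hs
    have h₂ := congrArg Prod.snd hs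
    simp only [Prod.fst_add, Prod.snd_add, Prod.smul_fst, Prod.smul_snd, smul_eq_mul] at h₁ h₂
    rw [div_eq_iff h]
    simp only [cross, Prod.fst_sub, Prod.snd_sub]
    linear_combination d.1 * h₂ - d.2 * h₁
  · rintro rfl
    refine ⟨⟨cross (p - q) e / cross e d, ?_⟩, _, rfl⟩
    ext <;> simp only [Prod.fst_add, Prod.snd_add, Prod.smul_fst, Prod.smul_snd, smul_eq_mul] <;>
      field_simp <;> simp only [cross, Prod.fst_sub, Prod.snd_sub] <;> ring

theorem reflAcrossLine_image_lineThrough (m : ℝ) (v p : ℝ × ℝ) :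
    reflAcrossLine p (-m, 1) '' lineThrough v p =
      lineThrough p (p + reflectedDir m (v - p)) := by
  have hm : 1 + m ^ 2 ≠ 0 := by positivity
  have reflect_point (t : ℝ) : reflAcrossLine p (-m, 1) (v + t • (p - v)) =
      p + ((1 - t) / (1 + m ^ 2)) • reflectedDir m (v - p) := by
    have hip : ip (-m, 1) (-m, 1) = 1 + m ^ 2 := by simp only [ip]; ring
    rw [reflAcrossLine, hip]
    ext <;> simp only [ip, reflectedDir, Prod.fst_add, Prod.snd_add, Prod.fst_sub, Prod.snd_sub,
      Prod.smul_fst, Prod.smul_snd, smul_eq_mul] <;> field_simp <;> ring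
  ext w
  rw [mem_lineThrough_add_iff]
  constructor
  · rintro ⟨_, ⟨t, rfl⟩, rfl⟩
    exact ⟨_, reflect_point t⟩
  · rintro ⟨s, rfl⟩
    refine ⟨_, ⟨1 - s * (1 + m ^ 2), rfl⟩, ?_⟩
    rw [reflect_point, sub_sub_cancel, mul_div_cancel_right₀ s hm]

section

variable {F f : ℝ → ℝ} {v : ℝ × ℝ}

theorem Rline_inter_Rline_zero (hF0 : F 0 = 0) (hf0 : f 0 = 0) {x : ℝ}
    (h : cross (reflectedDir 0 v) (reflectedDir (f x) (v - zpt F x)) ≠ 0) :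
    Rline F f v x ∩ Rline F f v 0 =
      {(cross (zpt F x) (reflectedDir (f x) (v - zpt F x)) /
        cross (reflectedDir 0 v) (reflectedDir (f x) (v - zpt F x))) • (-v.1, v.2)} := by
  have hz : zpt F 0 = 0 := by rw [zpt, hF0, Prod.mk_zero_zero]
  simp only [Rline, normalDir, reflAcrossLine_image_lineThrough, hz, hf0, sub_zero]
  rw [lineThrough_inter_lineThrough h, sub_zero, zero_add, reflectedDir_zero v]

theorem tendsto_div_self_of_hasDerivWithinAt {Δ m : ℝ} (hΔ : 0 < Δ) (hF0 : F 0 = 0)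
    (h : HasDerivWithinAt F m (Ico 0 Δ) 0) :
    Tendsto (fun x ↦ F x / x) (𝓝[>] 0) (𝓝 m) := by
  have hslope := (hasDerivWithinAt_iff_tendsto_slope' left_notMem_Ioo).1
    (h.mono Ioo_subset_Ico_self)
  rw [nhdsWithin_Ioo_eq_nhdsGT hΔ] at hslope
  simpa only [slope_fun_def_field, hF0, sub_zero] using hslope

theorem tendsto_zero_of_tendsto_div_self {m : ℝ} (hF : Tendsto (fun x ↦ F x / x) (𝓝[>] 0) (𝓝 m)) :
    Tendsto F (𝓝[>] 0) (𝓝 0) := by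
  have hmul : Tendsto (fun x ↦ F x / x * x) (𝓝[>] 0) (𝓝 0) := by
    simpa using hF.mul (tendsto_nhdsWithin_of_tendsto_nhds tendsto_id)
  refine hmul.congr' ?_
  filter_upwards [self_mem_nhdsWithin] with x (hx : 0 < x)
  exact div_mul_cancel₀ _ hx.ne'

theorem tendsto_zpt (hF : Tendsto F (𝓝[>] 0) (𝓝 0)) : Tendsto (zpt F) (𝓝[>] 0) (𝓝 0) :=
  (tendsto_nhdsWithin_of_tendsto_nhds tendsto_id).prodMk_nhds hF

theorem tendsto_cross_zpt_div {d : ℝ → ℝ × ℝ} {u : ℝ × ℝ}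
    (hF : Tendsto (fun x ↦ F x / x) (𝓝[>] 0) (𝓝 0)) (hd : Tendsto d (𝓝[>] 0) (𝓝 u)) :
    Tendsto (fun x ↦ cross (zpt F x) (d x) / x) (𝓝[>] 0) (𝓝 u.2) := by
  have hlim : Tendsto (fun x ↦ (d x).2 - F x / x * (d x).1) (𝓝[>] 0) (𝓝 u.2) := by
    simpa using hd.snd_nhds.sub (hF.mul hd.fst_nhds)
  refine hlim.congr' ?_
  filter_upwards [self_mem_nhdsWithin] with x (hx : 0 < x)
  simp only [cross, zpt]
  field_simp

theorem tendsto_reflectedDir (hf : Tendsto f (𝓝[>] 0) (𝓝 0)) (hF : Tendsto F (𝓝[>] 0) (𝓝 0)) :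
    Tendsto (fun x ↦ reflectedDir (f x) (v - zpt F x)) (𝓝[>] 0) (𝓝 (reflectedDir 0 v)) := by
  have hcont : Continuous fun p : ℝ × ℝ × ℝ ↦ reflectedDir p.1 (v - p.2) := by
    unfold reflectedDir
    fun_prop
  simpa [Function.comp_def] using (hcont.tendsto (0, 0)).comp (hf.prodMk_nhds (tendsto_zpt hF))

theorem tendsto_ip_sub_zpt (hF : Tendsto F (𝓝[>] 0) (𝓝 0)) :
    Tendsto (fun x ↦ ip v (v - zpt F x)) (𝓝[>] 0) (𝓝 (ip v v)) := by
  have hcont : Continuous fun z : ℝ × ℝ ↦ ip v (v - z) := by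
    unfold ip
    fun_prop
  simpa [Function.comp_def] using (hcont.tendsto 0).comp (tendsto_zpt hF)

theorem tendsto_one_sub_sq_mul_cross_div (hf : Tendsto f (𝓝[>] 0) (𝓝 0))
    (hF : Tendsto (fun x ↦ F x / x) (𝓝[>] 0) (𝓝 0)) :
    Tendsto (fun x ↦ (1 - f x ^ 2) * (cross (zpt F x) v / x)) (𝓝[>] 0) (𝓝 v.2) := by
  simpa using ((hf.pow 2).const_sub 1).mul (tendsto_cross_zpt_div hF tendsto_const_nhds)

theorem cross_reflectedDir_zpt_eq_mul {x : ℝ} (hx : x ≠ 0) :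
    cross (reflectedDir 0 v) (reflectedDir (f x) (v - zpt F x)) =
      (f x / x * (2 * ip v (v - zpt F x)) - (1 - f x ^ 2) * (cross (zpt F x) v / x)) * x := by
  rw [cross_reflectedDir_zero_reflectedDir]
  field_simp

theorem eventually_cross_reflectedDir_neg (hf : Tendsto f (𝓝[>] 0) (𝓝 0))
    (hF : Tendsto (fun x ↦ F x / x) (𝓝[>] 0) (𝓝 0)) (hv : v ≠ 0) {c : ℝ}
    (hc : c * (2 * ip v v) < v.2) :
    ∀ᶠ x in 𝓝[>] 0, f x / x < c →
      cross (reflectedDir 0 v) (reflectedDir (f x) (v - zpt F x)) < 0 := by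
  have hip := tendsto_ip_sub_zpt (v := v) (tendsto_zero_of_tendsto_div_self hF)
  filter_upwards [self_mem_nhdsWithin, hip.eventually_const_lt (ip_self_pos hv),
    ((hip.const_mul 2).const_mul c).eventually_lt (tendsto_one_sub_sq_mul_cross_div hf hF) hc]
    with x (hx : 0 < x) hpos hlt hfx
  rw [cross_reflectedDir_zpt_eq_mul hx.ne']
  refine mul_neg_of_neg_of_pos (sub_neg.2 (lt_trans ?_ hlt)) hx
  gcongr

theorem eventually_mul_lt_cross_reflectedDir (hf : Tendsto f (𝓝[>] 0) (𝓝 0))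
    (hF : Tendsto (fun x ↦ F x / x) (𝓝[>] 0) (𝓝 0)) (hv : v ≠ 0) {K M : ℝ}
    (hM : K + v.2 < M * (2 * ip v v)) :
    ∀ᶠ x in 𝓝[>] 0, M < f x / x →
      K * x < cross (reflectedDir 0 v) (reflectedDir (f x) (v - zpt F x)) := by
  have hip := tendsto_ip_sub_zpt (v := v) (tendsto_zero_of_tendsto_div_self hF)
  filter_upwards [self_mem_nhdsWithin, hip.eventually_const_lt (ip_self_pos hv),
    ((tendsto_one_sub_sq_mul_cross_div hf hF).const_add K).eventually_lt
      ((hip.const_mul 2).const_mul M) hM] with x (hx : 0 < x) hpos hlt hfx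
  rw [cross_reflectedDir_zpt_eq_mul hx.ne']
  refine mul_lt_mul_of_pos_right (lt_sub_iff_add_lt.2 (hlt.trans ?_)) hx
  gcongr

theorem tendsto_cross_zpt_reflectedDir_div (hf : Tendsto f (𝓝[>] 0) (𝓝 0))
    (hF : Tendsto (fun x ↦ F x / x) (𝓝[>] 0) (𝓝 0)) :
    Tendsto (fun x ↦ cross (zpt F x) (reflectedDir (f x) (v - zpt F x)) / x)
      (𝓝[>] 0) (𝓝 v.2) := by
  simpa only [reflectedDir_zero] using
    tendsto_cross_zpt_div hF (tendsto_reflectedDir hf (tendsto_zero_of_tendsto_div_self hF))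

theorem eventually_cross_zpt_reflectedDir_pos (hf : Tendsto f (𝓝[>] 0) (𝓝 0))
    (hF : Tendsto (fun x ↦ F x / x) (𝓝[>] 0) (𝓝 0)) (hv2 : 0 < v.2) :
    ∀ᶠ x in 𝓝[>] 0, 0 < cross (zpt F x) (reflectedDir (f x) (v - zpt F x)) := by
  filter_upwards [self_mem_nhdsWithin,
    (tendsto_cross_zpt_reflectedDir_div hf hF).eventually_const_lt hv2] with x (hx : 0 < x) hpos
  exact (div_pos_iff_of_pos_right hx).1 hpos

theorem eventually_Rline_inter_snd_neg (hF0 : F 0 = 0) (hf0 : f 0 = 0)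
    (hf : Tendsto f (𝓝[>] 0) (𝓝 0)) (hF : Tendsto (fun x ↦ F x / x) (𝓝[>] 0) (𝓝 0))
    (hv2 : 0 < v.2) {c : ℝ} (hc : c * (2 * ip v v) < v.2) :
    ∀ᶠ x in 𝓝[>] 0, f x / x < c →
      ∃ w : ℝ × ℝ, Rline F f v x ∩ Rline F f v 0 = {w} ∧ w.2 < 0 := by
  have hv : v ≠ 0 := fun h ↦ hv2.ne' (congrArg Prod.snd h)
  filter_upwards [eventually_cross_reflectedDir_neg hf hF hv hc,
    eventually_cross_zpt_reflectedDir_pos hf hF hv2] with x hden hnum hfx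
  refine ⟨_, Rline_inter_Rline_zero hF0 hf0 (hden hfx).ne, ?_⟩
  exact mul_neg_of_neg_of_pos (div_neg_of_pos_of_neg hnum (hden hfx)) hv2

theorem eventually_Rline_inter_snd_mem_Ioo (hF0 : F 0 = 0) (hf0 : f 0 = 0)
    (hf : Tendsto f (𝓝[>] 0) (𝓝 0)) (hF : Tendsto (fun x ↦ F x / x) (𝓝[>] 0) (𝓝 0))
    (hv2 : 0 < v.2) {ε M : ℝ} (hε : 0 < ε) (hM : v.2 ^ 2 / ε + v.2 < M * (2 * ip v v)) :
    ∀ᶠ x in 𝓝[>] 0, M < f x / x →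
      ∃ w : ℝ × ℝ, Rline F f v x ∩ Rline F f v 0 = {w} ∧ 0 < w.2 ∧ w.2 < ε := by
  have hv : v ≠ 0 := fun h ↦ hv2.ne' (congrArg Prod.snd h)
  obtain ⟨K, hεK, hKM⟩ := exists_between (lt_sub_iff_add_lt.2 hM)
  have hK : 0 < K := (by positivity : 0 ≤ v.2 ^ 2 / ε).trans_lt hεK
  have hsq : v.2 * v.2 < K * ε := by rwa [← sq, ← div_lt_iff₀ hε]
  filter_upwards [self_mem_nhdsWithin,
    eventually_mul_lt_cross_reflectedDir hf hF hv (lt_sub_iff_add_lt.1 hKM),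
    eventually_cross_zpt_reflectedDir_pos hf hF hv2,
    ((tendsto_cross_zpt_reflectedDir_div hf hF).mul_const v.2).eventually_lt_const hsq]
    with x (hx : 0 < x) hden hnum hlt hfx
  have hden_pos := (mul_pos hK hx).trans (hden hfx)
  refine ⟨_, Rline_inter_Rline_zero hF0 hf0 hden_pos.ne', mul_pos (div_pos hnum hden_pos) hv2, ?_⟩
  calc cross (zpt F x) (reflectedDir (f x) (v - zpt F x)) /
        cross (reflectedDir 0 v) (reflectedDir (f x) (v - zpt F x)) * v.2
      < cross (zpt F x) (reflectedDir (f x) (v - zpt F x)) / (K * x) * v.2 := by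
        gcongr
        exact hden hfx
    _ = cross (zpt F x) (reflectedDir (f x) (v - zpt F x)) / x * v.2 / K := by
        field_simp
    _ < ε := by rwa [div_lt_iff₀' hK]

end

theorem reflected_rays_oscillate_general (Δ : ℝ) (hΔ : 0 < Δ) (F f : ℝ → ℝ) (hF0 : F 0 = 0)
    (hderiv : ∀ x ∈ Ico 0 Δ, HasDerivWithinAt F (f x) (Ico 0 Δ) x)
    (hfc : ContinuousWithinAt f (Ico 0 Δ) 0) (hf0 : f 0 = 0)
    (hliminf : ∀ ε > (0 : ℝ), ∃ᶠ x in 𝓝[>] (0 : ℝ), f x / x < ε)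
    (hlimsup : ∀ M : ℝ, ∃ᶠ x in 𝓝[>] (0 : ℝ), M < f x / x)
    (v : ℝ × ℝ) (hv2 : 0 < v.2) :
    ∀ ε > (0 : ℝ),
      (∃ x₁ : ℝ, x₁ ∈ Ioo 0 ε ∧ x₁ < Δ ∧
        ∃ w : ℝ × ℝ, Rline F f v x₁ ∩ Rline F f v 0 = {w} ∧ w.2 < 0) ∧
      (∃ x₂ : ℝ, x₂ ∈ Ioo 0 ε ∧ x₂ < Δ ∧
        ∃ w : ℝ × ℝ, Rline F f v x₂ ∩ Rline F f v 0 = {w} ∧ 0 < w.2 ∧ w.2 < ε) := by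
  intro ε hε
  have hv : 0 < 2 * ip v v := mul_pos two_pos (ip_self_pos fun h ↦ hv2.ne' (congrArg Prod.snd h))
  have hF : Tendsto (fun x ↦ F x / x) (𝓝[>] 0) (𝓝 0) := by
    simpa only [hf0] using
      tendsto_div_self_of_hasDerivWithinAt hΔ hF0 (hderiv 0 (left_mem_Ico.2 hΔ))
  have hf : Tendsto f (𝓝[>] 0) (𝓝 0) := by
    rw [← nhdsWithin_Ioo_eq_nhdsGT hΔ]
    simpa only [hf0] using (hfc.mono Ioo_subset_Ico_self).tendsto
  obtain ⟨c, hc_pos, hc⟩ := exists_between (div_pos hv2 hv)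
  obtain ⟨M, hM⟩ := exists_gt ((v.2 ^ 2 / ε + v.2) / (2 * ip v v))
  rw [lt_div_iff₀ hv] at hc
  rw [div_lt_iff₀ hv] at hM
  have hnear : ∀ᶠ x in 𝓝[>] (0 : ℝ), x ∈ Ioo 0 ε ∧ x < Δ := by
    filter_upwards [Ioo_mem_nhdsGT hε, Ioo_mem_nhdsGT hΔ] with x hxε hxΔ using ⟨hxε, hxΔ.2⟩
  have hneg := (hliminf c hc_pos).mp (eventually_Rline_inter_snd_neg hF0 hf0 hf hF hv2 hc)
  have hpos := (hlimsup M).mp (eventually_Rline_inter_snd_mem_Ioo hF0 hf0 hf hF hv2 hε hM)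
  obtain ⟨x₁, hw₁, hx₁ε, hx₁Δ⟩ := (hneg.and_eventually hnear).exists
  obtain ⟨x₂, hw₂, hx₂ε, hx₂Δ⟩ := (hpos.and_eventually hnear).exists
  exact ⟨⟨x₁, hx₁ε, hx₁Δ, hw₁⟩, x₂, hx₂ε, hx₂Δ, hw₂⟩

/-- **Claim 4.2.** Let `F : [0,Δ) → ℝ` be convex and differentiable with
`F 0 = 0`, derivative `f` continuous and increasing with `f 0 = 0`, with
`liminf_{x→0⁺} f x / x = 0` and `limsup_{x→0⁺} f x / x = ∞`; let `v = (v₁, v₂)` with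
`v₁ < 0 < v₂`. Whenever `R(z(x))` and `R(z(0))` meet in a single point, `y(x)` denotes
its second coordinate. Then for every `ε > 0` there are `x₁, x₂ ∈ (0, ε)` with
`y x₁ < 0` and `0 < y x₂ < ε`. -/
theorem reflected_rays_oscillate (Δ : ℝ) (hΔ : 0 < Δ) (F f : ℝ → ℝ)
    (hconv : ConvexOn ℝ (Ico 0 Δ) F) (hF0 : F 0 = 0)
    (hderiv : ∀ x ∈ Ico 0 Δ, HasDerivWithinAt F (f x) (Ico 0 Δ) x)
    (hfc : ContinuousOn f (Ico 0 Δ)) (hfm : MonotoneOn f (Ico 0 Δ)) (hf0 : f 0 = 0)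
    (hliminf : ∀ ε > (0 : ℝ), ∃ᶠ x in 𝓝[>] (0 : ℝ), f x / x < ε)
    (hlimsup : ∀ M : ℝ, ∃ᶠ x in 𝓝[>] (0 : ℝ), M < f x / x)
    (v : ℝ × ℝ) (hv1 : v.1 < 0) (hv2 : 0 < v.2) :
    ∀ ε > (0 : ℝ),
      (∃ x₁ : ℝ, x₁ ∈ Ioo 0 ε ∧ x₁ < Δ ∧
        ∃ w : ℝ × ℝ, Rline F f v x₁ ∩ Rline F f v 0 = {w} ∧ w.2 < 0) ∧
      (∃ x₂ : ℝ, x₂ ∈ Ioo 0 ε ∧ x₂ < Δ ∧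
        ∃ w : ℝ × ℝ, Rline F f v x₂ ∩ Rline F f v 0 = {w} ∧ 0 < w.2 ∧ w.2 < ε) :=
  reflected_rays_oscillate_general Δ hΔ F f hF0 hderiv (hfc 0 (left_mem_Ico.2 hΔ)) hf0
    hliminf hlimsup v hv2
end
end

section
/- Let J ⊂ ℝ be a nonempty open interval, let F : J → ℝ be convex and differentiable with derivative f = F' continuous and increasing, and let u₂ ∈ ℝ satisfy u₂ > F(x) for all x ∈ J. Assume that the set {x ∈ J : f is differentiable at x and f'(x) = 0} is dense in J and that the set {x ∈ J : lim_{y→x} (f(y) − f(x))/(y − x) = ∞} is dense in J. Then the function g(x) = (u₂ − F(x))·f(x) − x is not monotone on any nontrivial subinterval of J. -/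
open Set Filter Metric Topology

/-!
At a point where `f' = 0` the function `g = (u₂ - F) * f - id` has derivative `-f ^ 2 - 1 < 0`,
so `g` is not increasing near such a point. At a point where `f` has derivative `+∞`, so does `g`:
its difference quotients are those of `f` times a factor tending to `u₂ - F > 0`, plus a term that
converges because `F` is differentiable. Hence `g` is not decreasing near such a point.
Both kinds of points occur in every nontrivial subinterval.
-/

theorem slope_mul {k : Type*} [Field k] (u v : k → k) (x y : k) :
    slope (fun t => u t * v t) x y = u y * slope v x y + slope u x y * v x := by
  simp only [slope_def_field]
  ring

theorem slope_sub {k E : Type*} [Field k] [AddCommGroup E] [Module k E] (u v : k → E) (x y : k) :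
    slope (fun t => u t - v t) x y = slope u x y - slope v x y := by
  simp only [slope_def_module, sub_sub_sub_comm, smul_sub]

theorem not_antitoneOn_of_tendsto_slope_atTop {k : Type*} [Field k] [LinearOrder k]
    [IsStrictOrderedRing k] [TopologicalSpace k] {u : k → k} {x : k} {s : Set k} [(𝓝[≠] x).NeBot]
    (hs : s ∈ 𝓝 x) (hu : Tendsto (slope u x) (𝓝[≠] x) atTop) :
    ¬AntitoneOn u s := by
  intro hanti
  obtain ⟨y, hpos, hy⟩ :=
    ((hu.eventually_gt_atTop 0).and (mem_nhdsWithin_of_mem_nhds hs)).exists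
  exact hpos.not_ge (hanti.slope_nonpos (mem_of_mem_nhds hs) hy)

section OrderedField

variable {𝕜 : Type*} [NontriviallyNormedField 𝕜] [LinearOrder 𝕜] [IsStrictOrderedRing 𝕜]
  [OrderTopology 𝕜] {u v : 𝕜 → 𝕜} {u' v' x : 𝕜}

theorem not_monotoneOn_of_hasDerivAt_neg {s : Set 𝕜} (hs : s ∈ 𝓝 x) (hu : HasDerivAt u u' x)
    (hneg : u' < 0) : ¬MonotoneOn u s := by
  intro hmono
  obtain ⟨y, hlt, hy⟩ :=
    ((hu.tendsto_slope.eventually_lt_const hneg).and (mem_nhdsWithin_of_mem_nhds hs)).exists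
  exact hlt.not_ge (hmono.slope_nonneg (mem_of_mem_nhds hs) hy)

theorem tendsto_slope_mul_atTop (hu : HasDerivAt u u' x) (hpos : 0 < u x)
    (hv : Tendsto (slope v x) (𝓝[≠] x) atTop) :
    Tendsto (slope (fun t => u t * v t) x) (𝓝[≠] x) atTop := by
  have hux : Tendsto u (𝓝[≠] x) (𝓝 (u x)) := hu.continuousAt.continuousWithinAt
  simpa only [← slope_mul] using
    (hux.pos_mul_atTop hpos hv).atTop_add (hu.tendsto_slope.mul_const (v x))

theorem tendsto_slope_sub_atTop (hu : Tendsto (slope u x) (𝓝[≠] x) atTop)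
    (hv : HasDerivAt v v' x) :
    Tendsto (slope (fun t => u t - v t) x) (𝓝[≠] x) atTop := by
  simpa only [← sub_eq_add_neg, ← slope_sub] using hu.atTop_add hv.tendsto_slope.neg

end OrderedField

theorem hasDerivAt_sub_mul_sub_id {𝕜 : Type*} [NontriviallyNormedField 𝕜] {F f : 𝕜 → 𝕜} {f' x : 𝕜}
    (c : 𝕜) (hF : HasDerivAt F (f x) x) (hf : HasDerivAt f f' x) :
    HasDerivAt (fun t => (c - F t) * f t - t) ((c - F x) * f' - f x ^ 2 - 1) x :=
  (((hF.const_sub c).fun_mul hf).fun_sub (hasDerivAt_id' x)).congr_deriv (by ring)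

theorem inter_nonempty_of_isOpen_of_subset_closure {X : Type*} [TopologicalSpace X] {U D : Set X}
    (hU : IsOpen U) (hne : U.Nonempty) (hUD : U ⊆ closure D) : (D ∩ U).Nonempty := by
  rwa [← closure_inter_open_nonempty_iff hU, inter_eq_right.2 hUD]

theorem g_not_monotone_general {J : Set ℝ} {F f : ℝ → ℝ} {u₂ : ℝ}
    (hderiv : ∀ x ∈ J, HasDerivAt F (f x) x) (hu₂ : ∀ x ∈ J, F x < u₂)
    (hd0 : J ⊆ closure {y | y ∈ J ∧ HasDerivAt f 0 y})
    (hdinf : J ⊆ closure {y | y ∈ J ∧ Tendsto (slope f y) (𝓝[≠] y) atTop})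
    {s : Set ℝ} (hsJ : s ⊆ J) (hs : (interior s).Nonempty) :
    ¬(MonotoneOn (fun x => (u₂ - F x) * f x - x) s ∨
      AntitoneOn (fun x => (u₂ - F x) * f x - x) s) := by
  have hint : interior s ⊆ J := interior_subset.trans hsJ
  rintro (hmono | hanti)
  · obtain ⟨y, ⟨hyJ, hfy⟩, hys⟩ :=
      inter_nonempty_of_isOpen_of_subset_closure isOpen_interior hs (hint.trans hd0)
    have hneg : (u₂ - F y) * 0 - f y ^ 2 - 1 < 0 := by linarith [sq_nonneg (f y)]
    exact not_monotoneOn_of_hasDerivAt_neg (mem_interior_iff_mem_nhds.1 hys)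
      (hasDerivAt_sub_mul_sub_id u₂ (hderiv y hyJ) hfy) hneg hmono
  · obtain ⟨y, ⟨hyJ, hfy⟩, hys⟩ :=
      inter_nonempty_of_isOpen_of_subset_closure isOpen_interior hs (hint.trans hdinf)
    have hprod : Tendsto (slope (fun x => (u₂ - F x) * f x) y) (𝓝[≠] y) atTop :=
      tendsto_slope_mul_atTop ((hderiv y hyJ).const_sub u₂) (sub_pos.2 (hu₂ y hyJ)) hfy
    exact not_antitoneOn_of_tendsto_slope_atTop (mem_interior_iff_mem_nhds.1 hys)
      (tendsto_slope_sub_atTop hprod (hasDerivAt_id' y)) hanti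

/-- Let `J = (a, b)` be a nonempty open interval, `F : J → ℝ` convex and
differentiable with derivative `f` continuous and increasing, and `u₂ > F x` on `J`.
If both `{x ∈ J : f differentiable at x with f' x = 0}` and
`{x ∈ J : lim (f y - f x)/(y - x) = ∞}` are dense in `J`, then
`g x = (u₂ - F x) * f x - x` is not monotone on any nontrivial subinterval of `J`. -/
theorem g_not_monotone (a b : ℝ) (hab : a < b) (F f : ℝ → ℝ) (u₂ : ℝ)
    (hconv : ConvexOn ℝ (Ioo a b) F)
    (hderiv : ∀ x ∈ Ioo a b, HasDerivAt F (f x) x)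
    (hfc : ContinuousOn f (Ioo a b))
    (hfm : MonotoneOn f (Ioo a b))
    (hu₂ : ∀ x ∈ Ioo a b, F x < u₂)
    (hd0 : ∀ x ∈ Ioo a b, x ∈ closure {y : ℝ | y ∈ Ioo a b ∧ HasDerivAt f 0 y})
    (hdinf : ∀ x ∈ Ioo a b, x ∈ closure {y : ℝ | y ∈ Ioo a b ∧
      Tendsto (fun t : ℝ => (f t - f y) / (t - y)) (𝓝[≠] y) atTop}) :
    ∀ c d : ℝ, c < d → Icc c d ⊆ Ioo a b →
      ¬ (MonotoneOn (fun x : ℝ => (u₂ - F x) * f x - x) (Icc c d) ∨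
         AntitoneOn (fun x : ℝ => (u₂ - F x) * f x - x) (Icc c d)) := by
  intro c d hcd hsub
  simp only [← slope_fun_def_field] at hdinf
  exact g_not_monotone_general hderiv hu₂ hd0 hdinf hsub (by simpa using hcd)
end
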